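/- arXiv:2502.05047 — 3 statements merged into one kernel-verified Lean document; each statement's English description precedes it below -/
import Mathlib

section
/- Let n be a natural number and let M : Perm (Fin n) → ℂ. There exists a function w from the partitions of Fin n to ℂ such that for every permutation σ, M σ = ∑_{Λ : P(σ) ≤ Λ} w Λ (sum over all partitions Λ coarser than or equal to the cycle partition of σ), if and only if M is orbit invariant, i.e. M σ = M τ whenever P(σ) = P(τ). -/
open Finset Equiv

instance {n : ℕ} (σ : Equiv.Perm (Fin n)) :
    DecidableRel (Equiv.Perm.SameCycle.setoid σ).r :=
  fun x y => inferInstanceAs (Decidable (σ.SameCycle x y))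

/-- The cycle partition of a permutation of `Fin n`: the finpartition of `Fin n`
whose blocks are the orbits of `σ` (equivalence classes of `SameCycle σ`). -/
def Equiv.Perm.cyclePartition {n : ℕ} (σ : Equiv.Perm (Fin n)) :
    Finpartition (Finset.univ : Finset (Fin n)) :=
  Finpartition.ofSetoid (Equiv.Perm.SameCycle.setoid σ)

instance {n : ℕ} :
    DecidableRel (α := Finpartition (Finset.univ : Finset (Fin n))) (· ≤ ·) :=
  fun P Q => decidable_of_iff (∀ b ∈ P.parts, ∃ c ∈ Q.parts, b ⊆ c) Iff.rfl

/-- The finset of partitions coarser than or equal to (i.e. refined by) `P`. -/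
def coarsenings {n : ℕ} (P : Finpartition (Finset.univ : Finset (Fin n))) :
    Finset (Finpartition (Finset.univ : Finset (Fin n))) :=
  Finset.univ.filter fun Λ => P ≤ Λ

/-!
Orbit invariance says that `M` is a function `F` of the cycle partition. On any poset whose upper
sets `{z | x ≤ z}` are finite, Möbius inversion writes every function `F` as `x ↦ ∑ y ≥ x, w y`,
with weights `w y = ∑ z ≥ y, μ(y, z) F z`.
-/

section MoebiusInversion

variable {ι α G : Type*} [PartialOrder α] [LocallyFiniteOrderTop α]

-- The converse of `IncidenceAlgebra.moebius_inversion_top`.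
theorem sum_Ici_sum_Ici_mu_smul (R : Type*) [Ring R] [AddCommMonoid G] [Module R G]
    [LocallyFiniteOrder α] [DecidableEq α] (F : α → G) (x : α) :
    ∑ y ∈ Ici x, ∑ z ∈ Ici y, IncidenceAlgebra.mu R y z • F z = F x := by
  calc
    ∑ y ∈ Ici x, ∑ z ∈ Ici y, IncidenceAlgebra.mu R y z • F z
      = ∑ z ∈ Ici x, ∑ y ∈ Icc x z, IncidenceAlgebra.mu R y z • F z :=
        sum_comm' fun y z => by
          simp only [mem_Ici, mem_Icc]
          exact ⟨fun h => ⟨h, h.1.trans h.2⟩, And.left⟩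
    _ = ∑ z ∈ Ici x, if x = z then F z else 0 := by
        simp only [← sum_smul, IncidenceAlgebra.sum_Icc_mu_left, ite_smul, one_smul, zero_smul]
    _ = F x := by
        rw [sum_ite_eq, if_pos (mem_Ici.mpr le_rfl)]

theorem exists_forall_eq_sum_Ici [AddCommGroup G] (F : α → G) :
    ∃ w : α → G, ∀ x, F x = ∑ y ∈ Ici x, w y := by
  classical
  let : LocallyFiniteOrder α :=
    .ofFiniteIcc fun a _ => (Set.finite_Ici a).subset Set.Icc_subset_Ici_self
  exact ⟨fun y => ∑ z ∈ Ici y, IncidenceAlgebra.mu ℤ y z • F z,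
    fun x => (sum_Ici_sum_Ici_mu_smul ℤ F x).symm⟩

theorem partition_representation_iff_orbit_invariant_general [AddCommGroup G]
    (p : ι → α) (M : ι → G) :
    (∃ w : α → G, ∀ i, M i = ∑ y ∈ Ici (p i), w y) ↔ M.FactorsThrough p := by
  constructor
  · rintro ⟨w, hw⟩ i j hij
    rw [hw i, hw j, hij]
  · intro hM
    obtain ⟨F, rfl⟩ := (Function.factorsThrough_iff M).mp hM
    obtain ⟨w, hw⟩ := exists_forall_eq_sum_Ici F
    exact ⟨w, fun i => hw (p i)⟩

end MoebiusInversion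

theorem mem_coarsenings {n : ℕ} {P Λ : Finpartition (Finset.univ : Finset (Fin n))} :
    Λ ∈ coarsenings P ↔ P ≤ Λ :=
  Finset.mem_filter_univ Λ

/-- A function `M` on permutations admits a partition representation
`M σ = ∑_{Λ : P(σ) ≤ Λ} w Λ` if and only if `M` is orbit invariant. -/
theorem partition_representation_iff_orbit_invariant (n : ℕ)
    (M : Equiv.Perm (Fin n) → ℂ) :
    (∃ w : Finpartition (Finset.univ : Finset (Fin n)) → ℂ,
        ∀ σ : Equiv.Perm (Fin n), M σ = ∑ Λ ∈ coarsenings σ.cyclePartition, w Λ) ↔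
      (∀ σ τ : Equiv.Perm (Fin n), σ.cyclePartition = τ.cyclePartition → M σ = M τ) := by
  let : LocallyFiniteOrderTop (Finpartition (Finset.univ : Finset (Fin n))) :=
    .ofIci' _ coarsenings fun _ _ => mem_coarsenings
  exact partition_representation_iff_orbit_invariant_general Perm.cyclePartition M
end

section
/- Let n be a natural number and Λ a partition of Fin n with at least two blocks. Then the product over the blocks b of Λ of (card b)! is at most (n-1)!. Consequently, (∏_{b ∈ blocks(Λ)} (card b)!) / n! ≤ 1/n (as rational numbers, assuming n ≥ 1). -/
/-!
Fix one element in each block of a partition into `m` blocks. Merging blocks of sizes `i + 1` and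
`j + 1` into one of size `i + j + 1`, that is, identifying their fixed elements, does not decrease
the product of the factorials. Merging all the blocks in this way leaves a single block of size
`n - (m - 1)`, so the product is at most `(n - (m - 1))!`.
-/

section Factorial

open scoped Nat

theorem factorial_succ_mul_factorial_succ_le (i j : ℕ) :
    (i + 1)! * (j + 1)! ≤ (i + j + 1)! := by
  induction j with
  | zero => simp
  | succ j ih =>
    calc (i + 1)! * (j + 2)! = (j + 2) * ((i + 1)! * (j + 1)!) := by
          rw [Nat.factorial_succ (j + 1), Nat.mul_left_comm]
      _ ≤ (i + j + 2) * (i + j + 1)! := Nat.mul_le_mul (by lia) ih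
      _ = (i + (j + 1) + 1)! := (Nat.factorial_succ (i + j + 1)).symm

theorem prod_factorial_succ_le_factorial_sum_succ {ι : Type*} (s : Finset ι) (f : ι → ℕ) :
    ∏ i ∈ s, (f i + 1)! ≤ (∑ i ∈ s, f i + 1)! := by
  classical
  induction s using Finset.induction_on with
  | empty => simp
  | insert a s ha ih =>
    rw [Finset.prod_insert ha, Finset.sum_insert ha]
    calc (f a + 1)! * ∏ i ∈ s, (f i + 1)! ≤ (f a + 1)! * (∑ i ∈ s, f i + 1)! :=
          Nat.mul_le_mul_left _ ih
      _ ≤ (f a + ∑ i ∈ s, f i + 1)! := factorial_succ_mul_factorial_succ_le _ _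

end Factorial

section Finpartition

open scoped Finset Nat

variable {α : Type*} [DecidableEq α] {s : Finset α} (P : Finpartition s)

theorem sum_card_parts_sub_one : ∑ b ∈ P.parts, (#b - 1) = #s - #P.parts := by
  rw [Finset.sum_tsub_distrib _ fun b hb ↦ (P.nonempty_of_mem_parts hb).card_pos,
    P.sum_card_parts, ← Finset.card_eq_sum_ones]

theorem prod_factorial_card_parts_le : ∏ b ∈ P.parts, (#b)! ≤ (#s - #P.parts + 1)! :=
  calc ∏ b ∈ P.parts, (#b)! = ∏ b ∈ P.parts, (#b - 1 + 1)! :=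
        Finset.prod_congr rfl fun b hb ↦ by
          rw [Nat.sub_add_cancel (P.nonempty_of_mem_parts hb).card_pos]
    _ ≤ (∑ b ∈ P.parts, (#b - 1) + 1)! := prod_factorial_succ_le_factorial_sum_succ _ _
    _ = (#s - #P.parts + 1)! := by rw [sum_card_parts_sub_one]

theorem partition_factorial_prod_le_general {k : ℕ} (hk : k < #P.parts) :
    ∏ b ∈ P.parts, (#b)! ≤ (#s - k)! ∧
      ((∏ b ∈ P.parts, (#b)! : ℕ) : ℚ) / (#s)! ≤ 1 / (#s).descFactorial k := by
  have hks : k < #s := hk.trans_le P.card_parts_le_card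
  have hprod : ∏ b ∈ P.parts, (#b)! ≤ (#s - k)! :=
    (prod_factorial_card_parts_le P).trans (Nat.factorial_le (by lia))
  refine ⟨hprod, ?_⟩
  have hdesc : 0 < (#s).descFactorial k := Nat.descFactorial_pos.mpr hks.le
  rw [div_le_div_iff₀ (by positivity) (by positivity), one_mul]
  exact_mod_cast (Nat.mul_le_mul_right _ hprod).trans_eq (Nat.factorial_mul_descFactorial hks.le)

end Finpartition

/-- For a partition `Λ` of `Fin n` with at least two blocks, the product of the
factorials of the block sizes is at most `(n-1)!`; consequently, dividing by `n!`
gives a rational number at most `1/n` (assuming `n ≥ 1`). -/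
theorem partition_factorial_prod_le (n : ℕ)
    (Λ : Finpartition (Finset.univ : Finset (Fin n)))
    (h : 2 ≤ Λ.parts.card) :
    (∏ b ∈ Λ.parts, Nat.factorial b.card) ≤ Nat.factorial (n - 1) ∧
    (1 ≤ n →
      ((∏ b ∈ Λ.parts, Nat.factorial b.card : ℕ) : ℚ) / (Nat.factorial n : ℚ)
        ≤ 1 / (n : ℚ)) := by
  have h_general := partition_factorial_prod_le_general Λ h
  exact ⟨by simpa using h_general.1, fun _ ↦ by simpa using h_general.2⟩
end

section
/- Let n be a natural number and M : Perm (Fin n) → ℂ an arbitrary function. Define the twirled function M' by M' σ = (1/n!) · ∑_{τ ∈ Perm (Fin n)} M (τ σ τ⁻¹). Then M' admits a partition representation: there exists a function w from the partitions of Fin n to ℂ such that for every σ, M' σ = ∑_{Λ : P(σ) ≤ Λ} w Λ. In particular, M' is orbit invariant: M' σ = M' τ whenever P(σ) = P(τ). -/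
open Finset Equiv

/-!
Permutations with the same cycle partition have the same cycle type, hence are conjugate, and
twirling makes `M` constant on conjugacy classes. So `M'` factors through `σ ↦ P(σ)`. Extending it
arbitrarily to all partitions, Möbius inversion on the refinement order gives the weights `w`.
-/

section CycleType

variable {α : Type*} [Fintype α] [DecidableEq α] (σ : Perm α)

theorem image_cycleOf_support : σ.support.image σ.cycleOf = σ.cycleFactorsFinset := by
  ext c
  simp only [mem_image]
  constructor
  · rintro ⟨x, hx, rfl⟩
    exact Perm.cycleOf_mem_cycleFactorsFinset_iff.2 hx
  · intro hc
    obtain ⟨x, hx⟩ := (Perm.mem_cycleFactorsFinset_iff.1 hc).1.nonempty_support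
    exact ⟨x, Perm.mem_cycleFactorsFinset_support_le hc hx, (Perm.cycle_is_cycleOf hx hc).symm⟩

theorem injOn_support_cycleFactorsFinset :
    Set.InjOn Perm.support (σ.cycleFactorsFinset : Set (Perm α)) := by
  intro c hc d hd hcd
  obtain ⟨x, hx⟩ := (Perm.mem_cycleFactorsFinset_iff.1 hc).1.nonempty_support
  exact (Perm.cycle_is_cycleOf hx hc).trans (Perm.cycle_is_cycleOf (hcd ▸ hx) hd).symm

variable {σ} in
theorem support_cycleOf_eq_filter_sameCycle {x : α} (hx : x ∈ σ.support) :
    (σ.cycleOf x).support = ({y | σ.SameCycle x y} : Finset α) := by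
  ext y
  rw [Perm.mem_support_cycleOf_iff, mem_filter_univ, and_iff_left hx]

theorem cycleType_eq_map_card_sameCycle :
    σ.cycleType =
      (σ.support.image fun x => ({y | σ.SameCycle x y} : Finset α)).val.map card := by
  have supports_eq : σ.cycleFactorsFinset.image Perm.support =
      σ.support.image fun x => ({y | σ.SameCycle x y} : Finset α) := by
    rw [← image_cycleOf_support, image_image]
    exact image_congr fun x hx => support_cycleOf_eq_filter_sameCycle hx
  rw [← supports_eq, image_val_of_injOn (injOn_support_cycleFactorsFinset σ), Multiset.map_map,
    Perm.cycleType_def]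

theorem mem_support_iff_exists_sameCycle_ne (x : α) :
    x ∈ σ.support ↔ ∃ y, σ.SameCycle x y ∧ y ≠ x := by
  rw [Perm.mem_support]
  constructor
  · intro hx
    exact ⟨σ x, Perm.sameCycle_apply_right.2 (Perm.SameCycle.refl σ x), hx⟩
  · rintro ⟨y, hxy, hne⟩ hx
    exact hne (hxy.eq_of_left hx).symm

end CycleType

theorem isConj_of_sameCycle_iff {α : Type*} [Finite α] {σ τ : Perm α}
    (h : ∀ x y, σ.SameCycle x y ↔ τ.SameCycle x y) : IsConj σ τ := by
  classical
  have := Fintype.ofFinite α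
  have support_eq : σ.support = τ.support := by
    ext x
    simp only [mem_support_iff_exists_sameCycle_ne, h]
  rw [Perm.isConj_iff_cycleType_eq, cycleType_eq_map_card_sameCycle,
    cycleType_eq_map_card_sameCycle, support_eq]
  simp only [h]

section MoebiusInversion

variable {α A : Type*} [PartialOrder α] [LocallyFiniteOrderTop α] [AddCommGroup A]

/-- The Möbius transform of `g` with respect to upper sets, determined by
`∑ y ∈ Ici x, upperMoebius g y = g x`. It is defined by recursion from the top rather than through
the Möbius function, so that values in any additive commutative group are allowed. -/
def upperMoebius (g : α → A) (x : α) : A :=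
  g x - ∑ y : Ioi x, upperMoebius g y
termination_by #(Ioi x)
decreasing_by exact card_lt_card (Ioi_ssubset_Ioi (mem_Ioi.1 y.2))

theorem sum_Ici_upperMoebius (g : α → A) (x : α) : ∑ y ∈ Ici x, upperMoebius g y = g x := by
  rw [← add_sum_Ioi_eq_sum_Ici, upperMoebius, sum_coe_sort (Ioi x) (upperMoebius g),
    sub_add_cancel]

end MoebiusInversion

theorem sum_conj_eq_of_isConj {G A : Type*} [Group G] [Fintype G] [AddCommMonoid A] (f : G → A)
    {a b : G} (h : IsConj a b) : ∑ g, f (g * a * g⁻¹) = ∑ g, f (g * b * g⁻¹) := by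
  obtain ⟨c, rfl⟩ := isConj_iff.1 h
  refine (Fintype.sum_equiv (Equiv.mulRight c) _ _ fun g => ?_).symm
  simp [mul_assoc]

section CyclePartition

variable {n : ℕ} {A : Type*} [AddCommGroup A]

theorem mem_part_cyclePartition (σ : Perm (Fin n)) (x y : Fin n) :
    y ∈ σ.cyclePartition.part x ↔ σ.SameCycle x y :=
  Finpartition.mem_part_ofSetoid_iff_rel (s := Perm.SameCycle.setoid σ)

theorem isConj_of_cyclePartition_eq {σ τ : Perm (Fin n)}
    (h : σ.cyclePartition = τ.cyclePartition) : IsConj σ τ :=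
  isConj_of_sameCycle_iff fun x y => by
    rw [← mem_part_cyclePartition, ← mem_part_cyclePartition, h]

theorem exists_eq_sum_coarsenings (g : Finpartition (univ : Finset (Fin n)) → A) :
    ∃ w : Finpartition (univ : Finset (Fin n)) → A, ∀ P, g P = ∑ Λ ∈ coarsenings P, w Λ := by
  let _ : LocallyFiniteOrderTop (Finpartition (univ : Finset (Fin n))) :=
    .ofIci _ coarsenings fun P Λ => by simp [coarsenings]
  exact ⟨upperMoebius g, fun P => (sum_Ici_upperMoebius g P).symm⟩

theorem twirled_has_partition_representation_general (f : Perm (Fin n) → A)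
    (hf : ∀ σ τ, IsConj σ τ → f σ = f τ) :
    (∃ w : Finpartition (univ : Finset (Fin n)) → A,
        ∀ σ, f σ = ∑ Λ ∈ coarsenings σ.cyclePartition, w Λ) ∧
      ∀ σ τ : Perm (Fin n), σ.cyclePartition = τ.cyclePartition → f σ = f τ := by
  have orbit_invariant : f.FactorsThrough Perm.cyclePartition := fun σ τ h =>
    hf σ τ (isConj_of_cyclePartition_eq h)
  refine ⟨?_, fun σ τ h => orbit_invariant h⟩
  obtain ⟨w, hw⟩ := exists_eq_sum_coarsenings (Function.extend Perm.cyclePartition f 0)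
  exact ⟨w, fun σ => by rw [← hw, orbit_invariant.extend_apply]⟩

end CyclePartition

/-- The twirled function `M' σ = (1/n!) ∑_τ M (τ σ τ⁻¹)` admits a partition
representation; in particular it is orbit invariant. -/
theorem twirled_has_partition_representation (n : ℕ)
    (M M' : Equiv.Perm (Fin n) → ℂ)
    (hM' : ∀ σ : Equiv.Perm (Fin n),
      M' σ = (1 / (Nat.factorial n : ℂ)) *
        ∑ τ : Equiv.Perm (Fin n), M (τ * σ * τ⁻¹)) :
    (∃ w : Finpartition (Finset.univ : Finset (Fin n)) → ℂ,
        ∀ σ : Equiv.Perm (Fin n), M' σ = ∑ Λ ∈ coarsenings σ.cyclePartition, w Λ) ∧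
      (∀ σ τ : Equiv.Perm (Fin n),
        σ.cyclePartition = τ.cyclePartition → M' σ = M' τ) := by
  exact twirled_has_partition_representation_general M' fun σ τ h => by
    rw [hM', hM', sum_conj_eq_of_isConj M h]
end
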